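/- Let L be a finite simplicial complex whose underlying space (the union of its faces) is homeomorphic to the 2-sphere. Then the 1-skeleton of L contains no complete bipartite graph K₃,₃: there do not exist six distinct vertices a₁, a₂, a₃, b₁, b₂, b₃ of L such that {aᵢ, bⱼ} is an edge (1-simplex) of L for every i, j ∈ {1,2,3}. -/

import Mathlib

open Geometry

/-- The ambient space for our simplicial complexes. -/
abbrev E3 : Type := EuclideanSpace ℝ (Fin 3)

noncomputable instance : DecidableEq E3 := Classical.decEq _

/-!
A tripod in the plane, three arcs from a centre `a` to feet `b 0, b 1, b 2`, has a cyclic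
orientation. It is recorded by a nonzero complex number built from continuous square roots of
`t ↦ α j t - b l`, whose square is `∏ j ≠ l, (b j - b l)`, so that only its sign depends on the
tripod. If two tripods share their feet and arms with different feet are disjoint, then
`α j s - α' l t` has a continuous square root on the unit square, and comparing its values around
the boundary shows that the orientations are opposite. A planar drawing of `K₃,₃` contains three
tripods with common feet, and they cannot be pairwise opposite.

On the sphere, an edge of a drawing meets the union of the other edges in at most its two ends.
Since the sphere stays connected without these two points, the edges cannot cover it, and a
stereographic projection from an uncovered point carries the drawing to the plane.
-/

open Function Module Set
open scoped unitInterval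

/-! ### Continuous square roots along arcs -/

lemma exists_continuous_pow_eq {X : Type*} [TopologicalSpace X] [SimplyConnectedSpace X]
    [LocallyPathConnectedSpace X] {n : ℕ} (hn : n ≠ 0) {f : X → ℂ} (hf : Continuous f)
    (hf0 : ∀ x, f x ≠ 0) : ∃ g : X → ℂ, Continuous g ∧ ∀ x, g x ^ n = f x := by
  obtain ⟨x₀⟩ : Nonempty X := inferInstance
  obtain ⟨z, hz⟩ := IsAlgClosed.exists_pow_nat_eq (f x₀) hn.pos
  obtain ⟨g, ⟨-, hg⟩, -⟩ :=
    (isCoveringMapOn_npow n (Nat.cast_ne_zero.2 hn)).existsUnique_continuousMap_lifts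
      ⟨f, hf⟩ hz hf0
  exact ⟨g, g.continuous, congrFun hg⟩

instance : ContractibleSpace I :=
  (convex_Icc (0 : ℝ) 1).contractibleSpace ⟨0, unitInterval.zero_mem⟩

instance : LocallyPathConnectedSpace I := (convex_Icc (0 : ℝ) 1).locallyPathConnectedSpace ℝ

/-- The ratio `g 1 / g 0` of the end values of a continuous square root `g` of `f`, which is the
same for both choices of `g`; a junk value unless `f` is continuous and has no zeros. -/
noncomputable def sqrtRatio (f : I → ℂ) : ℂ :=
  Classical.epsilon fun r => ∀ g : I → ℂ, Continuous g → (∀ t, g t ^ 2 = f t) → g 1 = r * g 0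

lemma sqrtRatio_eq_div {f g : I → ℂ} (hg : Continuous g) (hgf : ∀ t, g t ^ 2 = f t)
    (hf0 : ∀ t, f t ≠ 0) : sqrtRatio f = g 1 / g 0 := by
  have hg0 (t : I) : g t ≠ 0 := fun h => hf0 t (by rw [← hgf, h, zero_pow two_ne_zero])
  have hex : ∃ r, ∀ h : I → ℂ, Continuous h → (∀ t, h t ^ 2 = f t) → h 1 = r * h 0 := by
    refine ⟨g 1 / g 0, fun h hh hhf => ?_⟩
    obtain heq | heq := isPreconnected_univ.eq_or_eq_neg_of_sq_eq hh.continuousOn hg.continuousOn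
      (fun t _ => (hhf t).trans (hgf t).symm) (fun {t} _ => hg0 t)
    all_goals
      rw [heq (mem_univ 0), heq (mem_univ 1)]
      simp [hg0]
  rw [eq_div_iff (hg0 0)]
  exact (Classical.epsilon_spec hex g hg hgf).symm

lemma sqrtRatio_sq {f : I → ℂ} (hf : Continuous f) (hf0 : ∀ t, f t ≠ 0) :
    sqrtRatio f ^ 2 = f 1 / f 0 := by
  obtain ⟨g, hg, hgf⟩ := exists_continuous_pow_eq two_ne_zero hf hf0
  rw [sqrtRatio_eq_div hg hgf hf0, div_pow, hgf, hgf]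

lemma sqrtRatio_neg {f : I → ℂ} (hf : Continuous f) (hf0 : ∀ t, f t ≠ 0) :
    sqrtRatio (fun t => -f t) = sqrtRatio f := by
  obtain ⟨g, hg, hgf⟩ := exists_continuous_pow_eq two_ne_zero hf hf0
  have hIg : ∀ t, (Complex.I * g t) ^ 2 = -f t := fun t => by simp [mul_pow, hgf]
  rw [sqrtRatio_eq_div hg hgf hf0,
    sqrtRatio_eq_div (by fun_prop) hIg (fun t => neg_ne_zero.2 (hf0 t)),
    mul_div_mul_left _ _ Complex.I_ne_zero]

lemma sqrtRatio_mul_sqrtRatio {F : I × I → ℂ} (hF : Continuous F) (hF0 : ∀ p, F p ≠ 0) :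
    sqrtRatio (fun s => F (s, 0)) * sqrtRatio (fun t => F (1, t)) =
      sqrtRatio (fun t => F (0, t)) * sqrtRatio (fun s => F (s, 1)) := by
  obtain ⟨G, hG, hGF⟩ := exists_continuous_pow_eq two_ne_zero hF hF0
  have hG0 (p : I × I) : G p ≠ 0 := fun h => hF0 p (by rw [← hGF, h, zero_pow two_ne_zero])
  rw [sqrtRatio_eq_div (g := fun s => G (s, 0)) (by fun_prop) (fun _ => hGF _) (fun _ => hF0 _),
    sqrtRatio_eq_div (g := fun t => G (1, t)) (by fun_prop) (fun _ => hGF _) (fun _ => hF0 _),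
    sqrtRatio_eq_div (g := fun t => G (0, t)) (by fun_prop) (fun _ => hGF _) (fun _ => hF0 _),
    sqrtRatio_eq_div (g := fun s => G (s, 1)) (by fun_prop) (fun _ => hGF _) (fun _ => hF0 _)]
  field_simp [hG0]

/-- The square root of `(b - z) / (a - z)` obtained by following a continuous square root of
`γ t - z` along an arc `γ` from `a` to `b`: its argument is half the angle through which `γ` turns
about `z`. -/
noncomputable def halfTurn {a b : ℂ} (γ : Path a b) (z : ℂ) : ℂ :=
  sqrtRatio fun t => γ t - z

lemma halfTurn_sq {a b z : ℂ} {γ : Path a b} (hz : z ∉ range γ) :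
    halfTurn γ z ^ 2 = (b - z) / (a - z) := by
  have h0 (t : I) : γ t - z ≠ 0 := sub_ne_zero.2 fun h => hz ⟨t, h⟩
  simpa [halfTurn] using sqrtRatio_sq (by fun_prop) h0

lemma halfTurn_ne_zero {a b z : ℂ} {γ : Path a b} (hz : z ∉ range γ) : halfTurn γ z ≠ 0 := by
  have ha : a ≠ z := fun h => hz (h ▸ γ.source_mem_range)
  have hb : b ≠ z := fun h => hz (h ▸ γ.target_mem_range)
  refine (pow_ne_zero_iff two_ne_zero).1 ?_
  rw [halfTurn_sq hz]
  exact div_ne_zero (sub_ne_zero.2 hb) (sub_ne_zero.2 ha)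

lemma sqrtRatio_sub_eq_halfTurn {a b z : ℂ} {γ : Path a b} (hz : z ∉ range γ) :
    sqrtRatio (fun t => z - γ t) = halfTurn γ z := by
  have h0 (t : I) : γ t - z ≠ 0 := sub_ne_zero.2 fun h => hz ⟨t, h⟩
  simpa [halfTurn] using sqrtRatio_neg (by fun_prop) h0

lemma halfTurn_mul_halfTurn {a b c d : ℂ} {γ : Path a b} {δ : Path c d}
    (h : Disjoint (range γ) (range δ)) :
    halfTurn γ c * halfTurn δ b = halfTurn δ a * halfTurn γ d := by
  have h0 (p : I × I) : γ p.1 - δ p.2 ≠ 0 :=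
    sub_ne_zero.2 (h.ne_of_mem (mem_range_self p.1) (mem_range_self p.2))
  have ha := sqrtRatio_sub_eq_halfTurn (h.notMem_of_mem_left γ.source_mem_range)
  have hb := sqrtRatio_sub_eq_halfTurn (h.notMem_of_mem_left γ.target_mem_range)
  rw [← ha, ← hb]
  simpa [halfTurn] using sqrtRatio_mul_sqrtRatio (by fun_prop) h0

/-! ### Orientation of planar tripods -/

/-- The orientation of the tripod with centre `a`, feet `b 0, b 1, b 2` and arms `α j`,
encoded as a complex number: its square is `∏ j ≠ l, (b j - b l)` when no arm passes through the
foot of another one, and its sign records the cyclic order of the arms around the centre. -/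
noncomputable def tripodOrientation {a : ℂ} {b : Fin 3 → ℂ} (α : ∀ j, Path a (b j)) : ℂ :=
  ∏ j, (b j - a) * ∏ l ∈ {j}ᶜ, halfTurn (α j) (b l)

lemma tripodOrientation_ne_zero {a : ℂ} {b : Fin 3 → ℂ} {α : ∀ j, Path a (b j)}
    (hα : ∀ j l, j ≠ l → b l ∉ range (α j)) : tripodOrientation α ≠ 0 := by
  refine Finset.prod_ne_zero_iff.2 fun j _ => mul_ne_zero ?_ (Finset.prod_ne_zero_iff.2 ?_)
  · exact sub_ne_zero.2 fun h => hα (j + 1) j (by simp) (h ▸ (α (j + 1)).source_mem_range)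
  · exact fun l hl => halfTurn_ne_zero (hα j l (by simpa [eq_comm] using hl))

lemma prod_pow_mul_prod_compl_eq {κ M : Type*} [Fintype κ] [DecidableEq κ] [CommMonoid M]
    {u u' : κ → M} {v v' : κ → κ → M} (h : ∀ j l, j ≠ l → u j * v' l j = u' l * v j l) :
    ∏ j, (u j ^ (Fintype.card κ - 1) * ∏ l ∈ {j}ᶜ, v' j l) =
      ∏ j, (u' j ^ (Fintype.card κ - 1) * ∏ l ∈ {j}ᶜ, v j l) := by
  have hswap (f : κ → κ → M) : ∏ j, ∏ l ∈ {j}ᶜ, f j l = ∏ j, ∏ l ∈ {j}ᶜ, f l j :=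
    Finset.prod_comm' (by simp [eq_comm])
  have hconst (f : κ → M) (j : κ) : f j ^ (Fintype.card κ - 1) = ∏ _l ∈ {j}ᶜ, f j := by
    rw [Finset.prod_const, Finset.card_compl, Finset.card_singleton]
  calc ∏ j, (u j ^ (Fintype.card κ - 1) * ∏ l ∈ {j}ᶜ, v' j l)
      = ∏ j, ∏ l ∈ {j}ᶜ, (u j * v' l j) := by
        simp only [hconst, Finset.prod_mul_distrib, hswap v']
    _ = ∏ j, ∏ l ∈ {j}ᶜ, (u' l * v j l) :=
        Finset.prod_congr rfl fun j _ => Finset.prod_congr rfl fun l hl =>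
          h j l (by simpa [eq_comm] using hl)
    _ = ∏ j, (u' j ^ (Fintype.card κ - 1) * ∏ l ∈ {j}ᶜ, v j l) := by
        simp only [hconst, Finset.prod_mul_distrib, hswap fun j _ => u' j]

lemma tripodOrientation_eq_neg {a a' : ℂ} {b : Fin 3 → ℂ} {α : ∀ j, Path a (b j)}
    {α' : ∀ j, Path a' (b j)} (h : ∀ j l, j ≠ l → Disjoint (range (α j)) (range (α' l))) :
    tripodOrientation α = -tripodOrientation α' := by
  have ha : a ≠ a' :=
    (h 0 1 (by decide)).ne_of_mem (α 0).source_mem_range (α' 1).source_mem_range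
  have hα (j : Fin 3) : b j - a' = (a - a') * halfTurn (α j) a' ^ 2 := by
    rw [halfTurn_sq ((h j (j + 1) (by simp)).notMem_of_mem_right (α' (j + 1)).source_mem_range),
      mul_div_cancel₀ _ (sub_ne_zero.2 ha)]
  have hα' (j : Fin 3) : b j - a = (a' - a) * halfTurn (α' j) a ^ 2 := by
    rw [halfTurn_sq ((h (j + 1) j (by simp)).notMem_of_mem_left (α (j + 1)).source_mem_range),
      mul_div_cancel₀ _ (sub_ne_zero.2 ha.symm)]
  have hprod := prod_pow_mul_prod_compl_eq (u := fun j => halfTurn (α j) a')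
    (u' := fun j => halfTurn (α' j) a) (v := fun j l => halfTurn (α j) (b l))
    (v' := fun j l => halfTurn (α' j) (b l)) fun j l hjl => halfTurn_mul_halfTurn (h j l hjl)
  simp only [Fintype.card_fin, Nat.reduceSub] at hprod
  simp only [tripodOrientation, hα, hα', mul_assoc]
  rw [Finset.prod_mul_distrib (f := fun _ => a' - a),
    Finset.prod_mul_distrib (f := fun _ => a - a'), hprod]
  simp only [Finset.prod_const, Finset.card_univ, Fintype.card_fin]
  ring

/-! ### Covering by closed sets -/

lemma union_ne_univ_of_isPreconnected_compl {X : Type*} [TopologicalSpace X] {s C K : Set X}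
    (hs : IsPreconnected sᶜ) (hC : IsClosed C) (hK : IsClosed K) (hCK : C ∩ K ⊆ s)
    (hCs : ¬ C ⊆ s) (hKs : ¬ K ⊆ s) : C ∪ K ≠ univ := by
  intro hcover
  obtain ⟨x, hxC, hxs⟩ := not_subset.1 hCs
  obtain ⟨y, hyK, hys⟩ := not_subset.1 hKs
  obtain ⟨z, hzs, hz⟩ := isPreconnected_closed_iff.1 hs C K hC hK (hcover ▸ subset_univ _)
    ⟨x, hxs, hxC⟩ ⟨y, hys, hyK⟩
  exact hzs (hCK hz)

lemma not_range_path_subset_of_finite {X : Type*} [TopologicalSpace X] [T1Space X] {x y : X}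
    (hxy : x ≠ y) (γ : Path x y) {s : Set X} (hs : s.Finite) : ¬ range γ ⊆ s := fun hsub =>
  (isPreconnected_range γ.continuous).infinite_of_nontrivial
    ⟨x, γ.source_mem_range, y, γ.target_mem_range, hxy⟩ (hs.subset hsub)

/-! ### Drawings of complete bipartite graphs -/

/-- The arcs `γ i j` from `A i` to `B j` draw a complete bipartite graph without crossings: the
vertices are distinct and two different edges meet only in common ends. A single edge may
intersect itself. -/
structure IsCrossingFree {ι κ X : Type*} [TopologicalSpace X] {A : ι → X} {B : κ → X}
    (γ : ∀ i j, Path (A i) (B j)) : Prop where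
  injective_left : Injective A
  injective_right : Injective B
  left_ne_right : ∀ i j, A i ≠ B j
  range_inter_subset : ∀ ⦃i j k l⦄, (i, j) ≠ (k, l) →
    range (γ i j) ∩ range (γ k l) ⊆ {A i, B j} ∩ {A k, B l}

namespace IsCrossingFree

variable {ι κ X Y : Type*} [TopologicalSpace X] [TopologicalSpace Y] {A : ι → X} {B : κ → X}
  {γ : ∀ i j, Path (A i) (B j)}

lemma disjoint_range (h : IsCrossingFree γ) {i k : ι} {j l : κ} (hik : i ≠ k) (hjl : j ≠ l) :
    Disjoint (range (γ i j)) (range (γ k l)) := by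
  rw [disjoint_iff_inter_eq_empty, eq_empty_iff_forall_notMem]
  intro x hx
  obtain ⟨rfl | rfl, hx | hx⟩ := h.range_inter_subset (by simp [hik]) hx
  · exact hik (h.injective_left hx)
  · exact h.left_ne_right _ _ hx
  · exact h.left_ne_right _ _ hx.symm
  · exact hjl (h.injective_right hx)

lemma map [Nonempty ι] [Nonempty κ] (h : IsCrossingFree γ) {s : Set X}
    (hs : ∀ i j, range (γ i j) ⊆ s) {f : X → Y} (hf : ContinuousOn f s) (hinj : InjOn f s) :
    IsCrossingFree fun i j => (γ i j).map' (hf.mono (hs i j)) where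
  injective_left i k hik := by
    obtain ⟨j⟩ := ‹Nonempty κ›
    exact h.injective_left <|
      hinj (hs i j (γ i j).source_mem_range) (hs k j (γ k j).source_mem_range) hik
  injective_right j l hjl := by
    obtain ⟨i⟩ := ‹Nonempty ι›
    exact h.injective_right <|
      hinj (hs i j (γ i j).target_mem_range) (hs i l (γ i l).target_mem_range) hjl
  left_ne_right i j hij := h.left_ne_right i j <|
    hinj (hs i j (γ i j).source_mem_range) (hs i j (γ i j).target_mem_range) hij
  range_inter_subset := by
    rintro i j k l hne _ ⟨⟨t, rfl⟩, ⟨t', ht'⟩⟩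
    have heq : γ k l t' = γ i j t :=
      hinj (hs k l (mem_range_self t')) (hs i j (mem_range_self t)) ht'
    have := h.range_inter_subset hne ⟨mem_range_self t, t', heq⟩
    simpa using ⟨this.1.imp (congrArg f) (congrArg f), this.2.imp (congrArg f) (congrArg f)⟩

lemma exists_forall_notMem_range [Finite ι] [Finite κ] [Nontrivial ι] [Nonempty κ] [T2Space X]
    (hX : ∀ p q : X, IsPreconnected ({p, q}ᶜ : Set X)) (h : IsCrossingFree γ) :
    ∃ x, ∀ i j, x ∉ range (γ i j) := by
  obtain ⟨i, k, hik⟩ := exists_pair_ne ι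
  obtain ⟨j⟩ := ‹Nonempty κ›
  let K : Set X := ⋃ e : {e : ι × κ // (i, j) ≠ e}, range (γ e.1.1 e.1.2)
  have hclosed (i : ι) (j : κ) : IsClosed (range (γ i j)) :=
    (isCompact_range (γ i j).continuous).isClosed
  have hinter : range (γ i j) ∩ K ⊆ {A i, B j} := by
    rintro x ⟨hx, hxK⟩
    obtain ⟨⟨⟨k, l⟩, hne⟩, hx'⟩ := mem_iUnion.1 hxK
    exact (h.range_inter_subset hne ⟨hx, hx'⟩).1
  have hedge : ¬ range (γ i j) ⊆ {A i, B j} := fun hsub =>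
    not_range_path_subset_of_finite (h.left_ne_right i j) (γ i j) (by simp) hsub
  have hrest : ¬ K ⊆ {A i, B j} := fun hsub => by
    have hAk : A k ∈ K := mem_iUnion.2 ⟨⟨(k, j), by simp [hik]⟩, (γ k j).source_mem_range⟩
    obtain heq | heq := hsub hAk
    · exact hik (h.injective_left heq.symm)
    · exact h.left_ne_right k j heq
  have hcover := union_ne_univ_of_isPreconnected_compl (hX (A i) (B j)) (hclosed i j)
    (isClosed_iUnion_of_finite fun _ => hclosed _ _) hinter hedge hrest
  obtain ⟨x, hx⟩ := (ne_univ_iff_exists_notMem _).1 hcover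
  refine ⟨x, fun i' j' hx' => hx ?_⟩
  by_cases he : (i, j) = (i', j')
  · obtain ⟨rfl, rfl⟩ := Prod.mk.inj he
    exact Or.inl hx'
  · exact Or.inr (mem_iUnion.2 ⟨⟨(i', j'), he⟩, hx'⟩)

end IsCrossingFree

lemma not_isCrossingFree_complex {A B : Fin 3 → ℂ} (γ : ∀ i j, Path (A i) (B j)) :
    ¬ IsCrossingFree γ := by
  intro h
  have hdisj (i k : Fin 3) (hik : i ≠ k) (j l : Fin 3) (hjl : j ≠ l) :
      Disjoint (range (γ i j)) (range (γ k l)) := h.disjoint_range hik hjl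
  have hneg (i k : Fin 3) (hik : i ≠ k) : tripodOrientation (γ i) = -tripodOrientation (γ k) :=
    tripodOrientation_eq_neg (hdisj i k hik)
  have hne : tripodOrientation (γ 0) ≠ 0 := tripodOrientation_ne_zero fun j l hjl =>
    (hdisj 0 1 (by decide) j l hjl).notMem_of_mem_right (γ 1 l).target_mem_range
  refine hne (self_eq_neg.1 ?_)
  calc tripodOrientation (γ 0) = -tripodOrientation (γ 1) := hneg 0 1 (by decide)
    _ = tripodOrientation (γ 2) := by rw [hneg 1 2 (by decide), neg_neg]
    _ = -tripodOrientation (γ 0) := hneg 2 0 (by decide)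

/-! ### Drawings on the sphere -/

lemma isPreconnected_compl_sphere_of_countable {F : Type*} [NormedAddCommGroup F]
    [InnerProductSpace ℝ F] {n : ℕ} [Fact (finrank ℝ F = n + 1)] (hn : 1 < n)
    {s : Set (Metric.sphere (0 : F) 1)} (hs : s.Countable) : IsPreconnected sᶜ := by
  have hF : finrank ℝ F = n + 1 := Fact.out
  obtain rfl | ⟨p, hp⟩ := s.eq_empty_or_nonempty
  · have hrank : 1 < Module.rank ℝ F :=
      Module.lt_rank_of_lt_finrank (by simpa [hF] using hn.trans n.lt_succ_self)
    have := Subtype.preconnectedSpace (isPreconnected_sphere hrank (0 : F) 1)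
    simpa using isPreconnected_univ
  · let φ := stereographic' n p
    have hrank : 1 < Module.rank ℝ (EuclideanSpace ℝ (Fin n)) :=
      Module.lt_rank_of_lt_finrank (by simpa using hn)
    have hcompl := ((hs.mono sdiff_subset).image φ).isConnected_compl_of_one_lt_rank hrank
      (s := φ '' (s \ {p}))
    convert hcompl.isPreconnected.image φ.symm (φ.continuousOn_symm.mono (by simp [φ])) using 1
    have hsource : φ.source = {p}ᶜ := stereographic'_source p
    have htarget : φ.target = univ := stereographic'_target p
    ext x
    constructor
    · intro hx
      have hxp : x ∈ φ.source := hsource ▸ fun h => hx (h ▸ hp)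
      refine ⟨φ x, ?_, φ.left_inv hxp⟩
      rintro ⟨y, ⟨hys, hyp⟩, hyx⟩
      exact hx (φ.injOn (hsource ▸ hyp) hxp hyx ▸ hys)
    · rintro ⟨y, hy, rfl⟩ hys
      have hyt : y ∈ φ.target := htarget ▸ mem_univ y
      exact hy ⟨φ.symm y, ⟨hys, hsource.subset (φ.map_target hyt)⟩, φ.right_inv hyt⟩

lemma exists_continuousOn_injOn_compl_singleton_sphere {F : Type*} [NormedAddCommGroup F]
    [InnerProductSpace ℝ F] [Fact (finrank ℝ F = 2 + 1)] (p : Metric.sphere (0 : F) 1) :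
    ∃ f : Metric.sphere (0 : F) 1 → ℂ, ContinuousOn f {p}ᶜ ∧ InjOn f {p}ᶜ := by
  let φ := stereographic' 2 p
  let τ := Complex.orthonormalBasisOneI.repr.symm
  have hsource : φ.source = {p}ᶜ := stereographic'_source p
  refine ⟨τ ∘ φ, ?_, ?_⟩
  · exact τ.continuous.comp_continuousOn (hsource ▸ φ.continuousOn)
  · exact τ.injective.comp_injOn (hsource ▸ φ.injOn)

lemma not_isCrossingFree_sphere {F : Type*} [NormedAddCommGroup F] [InnerProductSpace ℝ F]
    [Fact (finrank ℝ F = 2 + 1)] {A B : Fin 3 → Metric.sphere (0 : F) 1}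
    (γ : ∀ i j, Path (A i) (B j)) : ¬ IsCrossingFree γ := by
  intro h
  obtain ⟨p, hp⟩ := h.exists_forall_notMem_range fun x y =>
    isPreconnected_compl_sphere_of_countable one_lt_two ((toFinite {x, y}).countable)
  obtain ⟨f, hf, hinj⟩ := exists_continuousOn_injOn_compl_singleton_sphere p
  exact not_isCrossingFree_complex _
    (h.map (fun i j => subset_compl_singleton_iff.2 (hp i j)) hf hinj)

/-! ### Edges of simplicial complexes -/

section Segments

variable {E : Type*} [AddCommGroup E] [Module ℝ E]

/-- The straight segment between two points of `s`, as a path in the subspace `s`. -/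
noncomputable def segmentPath [TopologicalSpace E] [ContinuousAdd E] [ContinuousSMul ℝ E]
    {s : Set E} {a b : s} (h : segment ℝ (a : E) b ⊆ s) : Path a b where
  toFun t := ⟨Path.segment (a : E) b t, h (Path.range_segment (a : E) b ▸ mem_range_self t)⟩
  continuous_toFun := by fun_prop
  source' := by simp
  target' := by simp

lemma mem_range_segmentPath [TopologicalSpace E] [ContinuousAdd E] [ContinuousSMul ℝ E]
    {s : Set E} {a b x : s} {h : segment ℝ (a : E) b ⊆ s} :
    x ∈ range (segmentPath h) ↔ (x : E) ∈ segment ℝ (a : E) b := by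
  simp [segmentPath, ← Path.range_segment, Subtype.ext_iff]

variable [DecidableEq E] (L : SimplicialComplex ℝ E)

lemma segment_subset_space {a b : E} (hab : {a, b} ∈ L.faces) : segment ℝ a b ⊆ L.space := by
  simpa [convexHull_pair] using L.convexHull_subset_space hab

lemma segment_inter_segment_subset {a b c d : E} (hab : {a, b} ∈ L.faces) (hcd : {c, d} ∈ L.faces)
    (hne : ({a, b} : Set E) ≠ {c, d}) :
    segment ℝ a b ∩ segment ℝ c d ⊆ {a, b} ∩ {c, d} := by
  have hsub : (({a, b} : Set E) ∩ {c, d}).Subsingleton := by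
    rintro x ⟨hx, hx'⟩ y ⟨hy, hy'⟩
    by_contra hxy
    exact hne (by grind)
  have := L.inter_subset_convexHull hab hcd
  simpa [convexHull_pair, hsub.convex.convexHull_eq] using this

lemma isCrossingFree_segmentPath [TopologicalSpace E] [ContinuousAdd E] [ContinuousSMul ℝ E]
    {ι κ : Type*} {A : ι → L.space} {B : κ → L.space} (hA : Injective A) (hB : Injective B)
    (hAB : ∀ i j, A i ≠ B j) (hL : ∀ i j, {(A i : E), (B j : E)} ∈ L.faces) :
    IsCrossingFree fun i j => segmentPath (segment_subset_space L (hL i j)) where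
  injective_left := hA
  injective_right := hB
  left_ne_right := hAB
  range_inter_subset := by
    rintro i j k l hne x ⟨hx, hx'⟩
    rw [mem_range_segmentPath] at hx hx'
    have hpair : ({(A i : E), (B j : E)} : Set E) ≠ {(A k : E), (B l : E)} := by
      intro heq
      obtain ⟨hik, hjl⟩ | ⟨hil, -⟩ := pair_eq_pair_iff.1 heq
      · exact hne (Prod.ext (hA (Subtype.ext hik)) (hB (Subtype.ext hjl)))
      · exact hAB i l (Subtype.ext hil)
    simpa [Subtype.ext_iff] using segment_inter_segment_subset L (hL i j) (hL k l) hpair ⟨hx, hx'⟩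

end Segments

theorem no_K33_in_sphere_triangulation_general {E : Type*} [AddCommGroup E] [Module ℝ E]
    [TopologicalSpace E] [ContinuousAdd E] [ContinuousSMul ℝ E] [DecidableEq E]
    (L : SimplicialComplex ℝ E) {f : L.space → Metric.sphere (0 : E3) 1} (hf : Continuous f)
    (hinj : Injective f) :
    ¬ ∃ a b : Fin 3 → E, Injective a ∧ Injective b ∧
      (∀ i j : Fin 3, a i ≠ b j) ∧
      (∀ i j : Fin 3, ({a i, b j} : Finset E) ∈ L.faces) := by
  rintro ⟨a, b, ha, hb, hab, hL⟩
  let A (i : Fin 3) : L.space := ⟨a i, L.subset_space (hL i 0) (by simp)⟩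
  let B (j : Fin 3) : L.space := ⟨b j, L.subset_space (hL 0 j) (by simp)⟩
  have hdraw := isCrossingFree_segmentPath L (A := A) (B := B)
    (fun i k h => ha (congrArg Subtype.val h)) (fun j l h => hb (congrArg Subtype.val h))
    (fun i j h => hab i j (congrArg Subtype.val h)) hL
  have : Fact (finrank ℝ E3 = 2 + 1) := ⟨by simp⟩
  exact not_isCrossingFree_sphere _
    (hdraw.map (fun _ _ => subset_univ _) hf.continuousOn hinj.injOn)

/-- If `L` is a finite simplicial complex whose underlying space is
homeomorphic to the 2-sphere, then the 1-skeleton of `L` contains no complete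
bipartite graph `K₃,₃`: there are no six distinct vertices `a 0, a 1, a 2,
b 0, b 1, b 2` with every `{a i, b j}` an edge of `L`. -/
theorem no_K33_in_sphere_triangulation
    (L : SimplicialComplex ℝ E3) (hfin : L.faces.Finite)
    (hsphere : Nonempty (L.space ≃ₜ (Metric.sphere (0 : E3) 1 : Set E3))) :
    ¬ ∃ a b : Fin 3 → E3, Function.Injective a ∧ Function.Injective b ∧
      (∀ i j : Fin 3, a i ≠ b j) ∧
      (∀ i j : Fin 3, ({a i, b j} : Finset E3) ∈ L.faces) := by
  obtain ⟨h⟩ := hsphere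
  exact no_K33_in_sphere_triangulation_general L h.continuous h.injective
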